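/- Let F : ℝ × ℝ^d → ℝ^d satisfy |F(t,a) − F(t,b)| ≤ L₁|a − b| for all a,b ∈ ℝ^d and t ∈ [t₀, t_end]. Let y : [t₀, t_end] → ℝ^d be absolutely continuous with ∂_t y(t) = F(t, y(t)) for a.e. t and y(t₀) = y₀. Let 𝒯 be a time mesh of [t₀, t_end] and let z : [t₀, t_end] → ℝ^d be continuous with z(t₀) = y₀, such that on each T ∈ 𝒯 the residual R(t) := ∂_t z(t) − F(t, z(t)) restricted to T is absolutely continuous with square-integrable derivative and satisfies ∫_T R(t) dt = 0. Then sup_{t ∈ [t₀,t_end]} |y(t) − z(t)| ≤ e^{L₁(t_end − t₀)} · max_{T ∈ 𝒯} |T|^{3/2} ‖∂_t R‖_{L²(T)}. -/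

import Mathlib

open MeasureTheory Set

lemma aux_gronwall {a b L M : ℝ} (hab : a ≤ b) (hL : 0 ≤ L) {u : ℝ → ℝ}
    (hu : ContinuousOn u (Icc a b))
    (h : ∀ t ∈ Icc a b, u t ≤ M + L * ∫ s in a..t, u s) :
    ∀ t ∈ Icc a b, u t ≤ M * Real.exp (L * (t - a)) := by
  set v : ℝ → ℝ := IccExtend hab ((Icc a b).domRestrict u) with hv
  have hvc : Continuous v := (continuousOn_iff_continuous_domRestrict.mp hu).Icc_extend'
  have hvu : ∀ t ∈ Icc a b, v t = u t := fun t ht => by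
    rw [hv, IccExtend_of_mem hab _ ht]; rfl
  have hint : ∀ t ∈ Icc a b, ∫ s in a..t, u s = ∫ s in a..t, v s := fun t ht => by
    refine intervalIntegral.integral_congr fun s hs => ?_
    rw [uIcc_of_le ht.1] at hs
    exact (hvu s ⟨hs.1, hs.2.trans ht.2⟩).symm
  set U : ℝ → ℝ := fun t => M + L * ∫ s in a..t, v s with hU
  have hd : ∀ t, HasDerivAt U (L * v t) t := fun t =>
    ((intervalIntegral.integral_hasDerivAt_right (hvc.intervalIntegrable _ _)
      (hvc.stronglyMeasurableAtFilter _ _) hvc.continuousAt).const_mul L).const_add M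
  have key := le_gronwallBound_of_liminf_deriv_right_le (f := U) (f' := fun t => L * v t)
    (δ := M) (K := L) (ε := 0) (a := a) (b := b)
    (fun t _ => (hd t).continuousAt.continuousWithinAt)
    (fun t _ r hr => (hd t).hasDerivWithinAt.liminf_right_slope_le hr)
    (by simp [hU])
    (fun t ht => by
      have h1 := h t ⟨ht.1, ht.2.le⟩
      rw [hint t ⟨ht.1, ht.2.le⟩] at h1
      have h2 := hvu t ⟨ht.1, ht.2.le⟩
      rw [add_zero, h2]
      exact mul_le_mul_of_nonneg_left h1 hL)
  intro t ht
  have h1 := h t ht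
  rw [hint t ht] at h1
  have h2 := key t ht
  rw [gronwallBound_ε0] at h2
  exact h1.trans h2

lemma aux_cs {a b : ℝ} (hab : a < b) {g : ℝ → ℝ} (hg : IntervalIntegrable g volume a b)
    (hg2 : IntervalIntegrable (fun t => g t ^ 2) volume a b) :
    ∫ t in a..b, g t ≤ Real.sqrt (b - a) * Real.sqrt (∫ t in a..b, g t ^ 2) := by
  have hh : 0 < b - a := sub_pos.mpr hab
  set K := ∫ t in a..b, g t with hK
  rw [← Real.sqrt_mul hh.le]
  apply Real.le_sqrt_of_sq_le
  set m := K / (b - a) with hm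
  have h0 : 0 ≤ ∫ t in a..b, (g t - m) ^ 2 :=
    intervalIntegral.integral_nonneg hab.le fun t _ => sq_nonneg _
  have h1 : ∫ t in a..b, (g t - m) ^ 2 = (∫ t in a..b, g t ^ 2) - 2 * m * K + (b - a) * m ^ 2 := by
    have : (fun t => (g t - m) ^ 2) = fun t => (g t ^ 2 - 2 * m * g t) + m ^ 2 := by
      funext t; ring
    rw [this, intervalIntegral.integral_add (hg2.sub (hg.const_mul _)) (by simp),
      intervalIntegral.integral_sub hg2 (hg.const_mul _), intervalIntegral.integral_const_mul]
    simp
    exact Or.inl rfl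
  rw [h1] at h0
  have hKm : K = m * (b - a) := by rw [hm]; field_simp
  rw [hKm] at h0 ⊢
  nlinarith [mul_nonneg hh.le h0]

lemma aux_local {E : Type*} [NormedAddCommGroup E] [NormedSpace ℝ E] [CompleteSpace E]
    {a b : ℝ} (hab : a < b) {R R' : ℝ → E} {c : E}
    (hR' : IntervalIntegrable R' volume a b)
    (hR'2 : IntervalIntegrable (fun t => ‖R' t‖ ^ 2) volume a b)
    (hR : ∀ t ∈ Ioo a b, R t = c + ∫ s in a..t, R' s)
    (hm : ∫ t in a..b, R t = 0) :
    ∀ t ∈ Icc a b, ‖∫ s in a..t, R s‖ ≤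
      (b - a) ^ ((3 : ℝ) / 2) * Real.sqrt (∫ t in a..b, ‖R' t‖ ^ 2) := by
  have hh : 0 < b - a := sub_pos.mpr hab
  set G : ℝ → E := fun t => c + ∫ s in a..t, R' s with hG
  have hGR : ∀ t ∈ Icc a b, ∫ s in a..t, R s = ∫ s in a..t, G s := fun t ht =>
    intervalIntegral.integral_congr_Ioo_of_le ht.1 fun s hs => hR s ⟨hs.1, hs.2.trans_le ht.2⟩
  have hGc : ContinuousOn G (uIcc a b) :=
    continuousOn_const.add (intervalIntegral.continuousOn_primitive_interval' hR' left_mem_uIcc)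
  have hGi : IntervalIntegrable G volume a b := hGc.intervalIntegrable
  set K := ∫ t in a..b, ‖R' t‖ with hK
  have hsub : ∀ s ∈ Icc a b, ∀ t ∈ Icc a b, IntervalIntegrable R' volume s t := fun s hs t ht =>
    hR'.mono_set (by rw [uIcc_of_le hab.le]; exact uIcc_subset_Icc hs ht)
  have hle : ∀ s ∈ Icc a b, ∀ t ∈ Icc a b, s ≤ t → ‖G t - G s‖ ≤ K := by
    intro s hs t ht hst
    have h1 : G t - G s = ∫ x in s..t, R' x := by
      rw [hG]
      simp only [add_sub_add_left_eq_sub]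
      exact intervalIntegral.integral_interval_sub_left (hsub a (left_mem_Icc.2 hab.le) t ht)
        (hsub a (left_mem_Icc.2 hab.le) s hs)
    rw [h1]
    refine (intervalIntegral.norm_integral_le_integral_norm hst).trans ?_
    exact intervalIntegral.integral_mono_interval hs.1 hst ht.2
      (Filter.Eventually.of_forall fun x => norm_nonneg _) hR'.norm
  have hle' : ∀ s ∈ Icc a b, ∀ t ∈ Icc a b, ‖G t - G s‖ ≤ K := by
    intro s hs t ht
    rcases le_total s t with h | h
    · exact hle s hs t ht h
    · rw [norm_sub_rev]; exact hle t ht s hs h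
  have hGK : ∀ t ∈ Icc a b, ‖G t‖ ≤ K := by
    intro t ht
    have h1 : (b - a) • G t = ∫ s in a..b, (G t - G s) := by
      rw [intervalIntegral.integral_sub (by simp) hGi, ← hGR b (right_mem_Icc.2 hab.le), hm]
      simp
    have h2 : ‖∫ s in a..b, (G t - G s)‖ ≤ K * |b - a| :=
      intervalIntegral.norm_integral_le_of_norm_le_const fun s hs => by
        rw [uIoc_of_le hab.le] at hs
        exact hle' s ⟨hs.1.le, hs.2⟩ t ht
    rw [← h1, norm_smul, Real.norm_eq_abs, abs_of_pos hh, mul_comm] at h2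
    exact le_of_mul_le_mul_right h2 hh
  intro t ht
  rw [hGR t ht]
  have h2 : ‖∫ s in a..t, G s‖ ≤ K * |t - a| :=
    intervalIntegral.norm_integral_le_of_norm_le_const fun s hs => by
      rw [uIoc_of_le ht.1] at hs
      exact hGK s ⟨hs.1.le, hs.2.trans ht.2⟩
  have hK0 : 0 ≤ K := (norm_nonneg _).trans (hGK t ht)
  rw [abs_of_nonneg (sub_nonneg.2 ht.1)] at h2
  have h3 : K ≤ _ := aux_cs hab hR'.norm hR'2
  have h4 : (b - a) ^ ((3 : ℝ) / 2) = (b - a) * Real.sqrt (b - a) := by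
    rw [show (3 : ℝ) / 2 = 1 + 1 / 2 by norm_num, Real.rpow_add hh, Real.rpow_one,
      Real.sqrt_eq_rpow]
  rw [h4]
  calc _ ≤ K * (t - a) := h2
    _ ≤ K * (b - a) := by gcongr; exact ht.2
    _ ≤ _ := by nlinarith [mul_le_mul_of_nonneg_left h3 hh.le]

/-- pointwise a posteriori bound.
Under the assumptions of the reliability lemma, the pointwise error satisfies
`‖y t − z t‖ ≤ e^{L₁ (t_end − t₀)} · max_{T ∈ 𝒯} |T|^{3/2} ‖∂ₜ R‖_{L²(T)}`
for every `t ∈ [t₀, t_end]`. -/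
theorem stmt_4
    (d : ℕ) (hd : 1 ≤ d) (t0 tend : ℝ) (ht : t0 < tend)
    (L1 : ℝ)
    (F : ℝ → EuclideanSpace ℝ (Fin d) → EuclideanSpace ℝ (Fin d))
    (hF : ∀ t ∈ Icc t0 tend, ∀ a b : EuclideanSpace ℝ (Fin d),
      ‖F t a - F t b‖ ≤ L1 * ‖a - b‖)
    -- the time mesh, given by its break points:
    (n : ℕ) (hn : 0 < n) (pts : Fin (n + 1) → ℝ)
    (hmono : StrictMono pts) (hfirst : pts 0 = t0) (hlast : pts (Fin.last n) = tend)
    (y0 : EuclideanSpace ℝ (Fin d))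
    (y y' z z' R R' : ℝ → EuclideanSpace ℝ (Fin d))
    -- `y` is absolutely continuous with derivative `y'` and solves the ODE a.e.:
    (hy'int : IntervalIntegrable y' volume t0 tend)
    (hyrep : ∀ t ∈ Icc t0 tend, y t = y0 + ∫ s in t0..t, y' s)
    (hyode : ∀ᵐ t ∂(volume.restrict (Icc t0 tend)), y' t = F t (y t))
    -- `z` is continuous, `z t₀ = y₀`, and on each mesh interval absolutely
    -- continuous with derivative `z'`:
    (hzcont : ContinuousOn z (Icc t0 tend))
    (hz0 : z t0 = y0)
    (hz'int : IntervalIntegrable z' volume t0 tend)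
    (hzrep : ∀ i : Fin n, ∀ t ∈ Icc (pts i.castSucc) (pts i.succ),
      z t = z (pts i.castSucc) + ∫ s in (pts i.castSucc)..t, z' s)
    -- the residual and its per-interval derivative:
    (hR : ∀ t, R t = z' t - F t (z t))
    (hRint : IntervalIntegrable R volume t0 tend)
    (hR'int : IntervalIntegrable R' volume t0 tend)
    (hR'sq : IntervalIntegrable (fun t => ‖R' t‖ ^ 2) volume t0 tend)
    (hRAC : ∀ i : Fin n, ∃ c : EuclideanSpace ℝ (Fin d),
      ∀ t ∈ Ioo (pts i.castSucc) (pts i.succ),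
        R t = c + ∫ s in (pts i.castSucc)..t, R' s)
    -- the residual has mean zero on each mesh interval:
    (hmean : ∀ i : Fin n, (∫ t in (pts i.castSucc)..(pts i.succ), R t) = 0) :
    ∀ t ∈ Icc t0 tend,
      ‖y t - z t‖ ≤ Real.exp (L1 * (tend - t0)) *
        Finset.univ.sup' (Finset.univ_nonempty_iff.mpr (Fin.pos_iff_nonempty.mp hn))
          (fun i : Fin n => (pts i.succ - pts i.castSucc) ^ ((3 : ℝ) / 2) *
            Real.sqrt (∫ t in (pts i.castSucc)..(pts i.succ), ‖R' t‖ ^ 2)) := by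
  set M := Finset.univ.sup' (Finset.univ_nonempty_iff.mpr (Fin.pos_iff_nonempty.mp hn))
          (fun i : Fin n => (pts i.succ - pts i.castSucc) ^ ((3 : ℝ) / 2) *
            Real.sqrt (∫ t in (pts i.castSucc)..(pts i.succ), ‖R' t‖ ^ 2)) with hM
  have hMi : ∀ i : Fin n, (pts i.succ - pts i.castSucc) ^ ((3 : ℝ) / 2) *
            Real.sqrt (∫ t in (pts i.castSucc)..(pts i.succ), ‖R' t‖ ^ 2) ≤ M := fun i =>
    Finset.le_sup' (fun i : Fin n => (pts i.succ - pts i.castSucc) ^ ((3 : ℝ) / 2) *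
            Real.sqrt (∫ t in (pts i.castSucc)..(pts i.succ), ‖R' t‖ ^ 2)) (Finset.mem_univ i)
  have hL : 0 ≤ L1 := by
    have h := hF t0 (left_mem_Icc.2 ht.le) (EuclideanSpace.single ⟨0, hd⟩ (1 : ℝ)) 0
    have h' := (norm_nonneg _).trans h
    simpa using h'
  have hmem : ∀ k, pts k ∈ Icc t0 tend := fun k =>
    ⟨hfirst ▸ hmono.monotone (Fin.zero_le k), hlast ▸ hmono.monotone (Fin.le_last k)⟩
  have hlt : ∀ i : Fin n, pts i.castSucc < pts i.succ := fun i => hmono Fin.castSucc_lt_succ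
  have hsub : ∀ {E : Type} [NormedAddCommGroup E] {f : ℝ → E}, IntervalIntegrable f volume t0 tend →
      ∀ s ∈ Icc t0 tend, ∀ t ∈ Icc t0 tend, IntervalIntegrable f volume s t :=
    fun hf s hs t ht' => hf.mono_set (by rw [uIcc_of_le ht.le]; exact uIcc_subset_Icc hs ht')
  have ht0 : t0 ∈ Icc t0 tend := left_mem_Icc.2 ht.le
  have hM0 : 0 ≤ M := by
    refine le_trans ?_ (hMi ⟨0, hn⟩)
    have := sub_pos.2 (hlt ⟨0, hn⟩)
    positivity
  have main : ∀ k : Fin (n + 1), (∫ s in t0..pts k, R s) = 0 ∧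
      ∀ t ∈ Icc t0 (pts k), ‖∫ s in t0..t, R s‖ ≤ M ∧ z t = y0 + ∫ s in t0..t, z' s := by
    intro k
    induction k using Fin.induction with
    | zero =>
      rw [hfirst]
      refine ⟨by simp, fun t h => ?_⟩
      have : t = t0 := le_antisymm h.2 h.1
      subst this
      simp [hM0, hz0]
    | succ i ih =>
      obtain ⟨ih1, ih2⟩ := ih
      have hp := hmem i.castSucc
      have hq := hmem i.succ
      constructor
      · rw [← intervalIntegral.integral_add_adjacent_intervals (hsub hRint _ ht0 _ hp)
          (hsub hRint _ hp _ hq), ih1, hmean i, add_zero]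
      · intro t h
        rcases le_total t (pts i.castSucc) with h1 | h1
        · exact ih2 t ⟨h.1, h1⟩
        · have htm : t ∈ Icc t0 tend := ⟨h.1, h.2.trans hq.2⟩
          constructor
          · rw [← intervalIntegral.integral_add_adjacent_intervals (hsub hRint _ ht0 _ hp)
              (hsub hRint _ hp _ htm), ih1, zero_add]
            obtain ⟨c, hc⟩ := hRAC i
            exact (aux_local (hlt i) (hsub hR'int _ hp _ hq) (hsub hR'sq _ hp _ hq) hc (hmean i)
              t ⟨h1, h.2⟩).trans (hMi i)
          · rw [← intervalIntegral.integral_add_adjacent_intervals (hsub hz'int _ ht0 _ hp)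
              (hsub hz'int _ hp _ htm), hzrep i t ⟨h1, h.2⟩,
              (ih2 (pts i.castSucc) ⟨hp.1, le_rfl⟩).2, add_assoc]
  have hfin := (main (Fin.last n)).2
  rw [hlast] at hfin
  have hyc : ContinuousOn y (Icc t0 tend) := by
    have h1 : ContinuousOn (fun t => y0 + ∫ s in t0..t, y' s) (Icc t0 tend) := by
      rw [← uIcc_of_le ht.le]
      exact continuousOn_const.add
        (intervalIntegral.continuousOn_primitive_interval' hy'int left_mem_uIcc)
    exact h1.congr hyrep
  have hec : ContinuousOn (fun t => ‖y t - z t‖) (Icc t0 tend) := (hyc.sub hzcont).norm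
  have hei : IntervalIntegrable (fun t => ‖y t - z t‖) volume t0 tend := by
    apply ContinuousOn.intervalIntegrable
    rwa [uIcc_of_le ht.le]
  have hode' := (ae_restrict_iff' measurableSet_Icc).1 hyode
  have hbound : ∀ t ∈ Icc t0 tend, ‖y t - z t‖ ≤ M + L1 * ∫ s in t0..t, ‖y s - z s‖ := by
    intro t htm
    have e1 : y t - z t = (∫ s in t0..t, (y' s - z' s + R s)) - ∫ s in t0..t, R s := by
      rw [intervalIntegral.integral_add ((hsub hy'int _ ht0 _ htm).sub (hsub hz'int _ ht0 _ htm))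
        (hsub hRint _ ht0 _ htm), intervalIntegral.integral_sub (hsub hy'int _ ht0 _ htm)
        (hsub hz'int _ ht0 _ htm), hyrep t htm, (hfin t htm).2]
      abel
    have e2 : ‖∫ s in t0..t, (y' s - z' s + R s)‖ ≤ ∫ s in t0..t, L1 * ‖y s - z s‖ := by
      refine intervalIntegral.norm_integral_le_of_norm_le htm.1 ?_
        ((hsub hei _ ht0 _ htm).const_mul L1)
      filter_upwards [hode'] with s hs hs'
      have hsm : s ∈ Icc t0 tend := ⟨hs'.1.le, hs'.2.trans htm.2⟩
      rw [hs hsm, hR s]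
      have : F s (y s) - z' s + (z' s - F s (z s)) = F s (y s) - F s (z s) := by abel
      rw [this]
      exact hF s hsm _ _
    rw [intervalIntegral.integral_const_mul] at e2
    rw [e1]
    refine (norm_sub_le _ _).trans ?_
    have := (hfin t htm).1
    linarith
  intro t htm
  refine (aux_gronwall ht.le hL hec hbound t htm).trans ?_
  rw [mul_comm]
  gcongr
  exact htm.2
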